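/- If χ(F) ≤ k, then any n-vertex F-free graph contains o(n^k) copies of K_k; in fact ex(n, K_k, F) = o(n^k). -/

import Mathlib

open SimpleGraph Filter Asymptotics Finset

/-- The set of copies of `H` in `G`: subgraphs of `G` isomorphic to `H`. -/
def SimpleGraph.copySet {α V : Type*} (H : SimpleGraph α) (G : SimpleGraph V) :
    Set G.Subgraph := {C | Nonempty (H ≃g C.coe)}

/-- The number of (unlabeled) copies of `H` in `G`, i.e. `N(H,G)`. -/
noncomputable def copyCount {α V : Type*} (H : SimpleGraph α) (G : SimpleGraph V) : ℕ :=
  (H.copySet G).ncard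

/-- `G` is `F`-free: it contains no subgraph isomorphic to `F`. -/
def FFree {β V : Type*} (F : SimpleGraph β) (G : SimpleGraph V) : Prop := F.copySet G = ∅

/-- The generalized Turán number `ex(n, H, F)`. -/
noncomputable def exGen {α β : Type*} (n : ℕ) (H : SimpleGraph α) (F : SimpleGraph β) : ℕ :=
  sSup {m | ∃ G : SimpleGraph (Fin n), FFree F G ∧ copyCount H G = m}

/-- The complete multipartite graph with part sizes `a 0, …, a (k-1)`. -/
def CMP (k : ℕ) (a : Fin k → ℕ) : SimpleGraph (Σ i : Fin k, Fin (a i)) :=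
  SimpleGraph.comap Sigma.fst ⊤

/-!
Pick `t` vertices for each of the `k` parts at random. By Jensen's inequality, applied to one part
after the other, if `k`-cliques have density `d` among the `k`-tuples of vertices, then with
probability at least `d ^ (t ^ k)` all `t ^ k` transversals of the parts are `k`-cliques. Some
vertex is picked twice with probability at most `(k * t) ^ 2 / n`, where `n` is the number of
vertices, so if `d` is bounded away from `0` and `n` is large, some choice without repetition spans
a complete `k`-partite graph with parts of size `t`. Any `k`-colorable graph on `t` vertices embeds
into it.
-/

open scoped BigOperators

section Averages

lemma expect_pow_le_expect_pow {ι : Type*} {s : Finset ι} (hs : s.Nonempty) {f : ι → ℝ}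
    (hf : ∀ i ∈ s, 0 ≤ f i) (m : ℕ) : (𝔼 i ∈ s, f i) ^ m ≤ 𝔼 i ∈ s, f i ^ m := by
  have hcard : (#s : ℝ) ≠ 0 := by exact_mod_cast hs.card_ne_zero
  have hJensen := Real.pow_arith_mean_le_arith_mean_pow s (fun _ => (#s : ℝ)⁻¹) f
    (fun _ _ => by positivity) (by simp [hcard]) hf m
  simpa only [expect_eq_sum_div_card, div_eq_inv_mul, mul_sum] using hJensen

lemma expect_expect_pow_le_expect_expect_prod {α β : Type*} [Fintype α] [Fintype β] [Nonempty β]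
    {g : α → β → ℝ} (hg : ∀ a b, 0 ≤ g a b) (m : ℕ) :
    (𝔼 a, 𝔼 b, g a b) ^ m ≤ 𝔼 x : Fin m → α, 𝔼 b, ∏ j, g (x j) b :=
  calc (𝔼 a, 𝔼 b, g a b) ^ m = (𝔼 b, 𝔼 a, g a b) ^ m := by rw [expect_comm]
    _ ≤ 𝔼 b, (𝔼 a, g a b) ^ m :=
        expect_pow_le_expect_pow univ_nonempty
          (fun b _ => expect_nonneg fun a _ => hg a b) m
    _ = 𝔼 b, 𝔼 x : Fin m → α, ∏ j, g (x j) b := by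
        simp only [expect_pow, Fintype.piFinset_univ]
    _ = 𝔼 x : Fin m → α, 𝔼 b, ∏ j, g (x j) b := expect_comm _ _ _

variable {k : ℕ} {V : Fin (k + 1) → Type*} [∀ i, Fintype (V i)]

lemma expect_fin_cons {M : Type*} [AddCommMonoid M] [Module ℚ≥0 M] (g : (∀ i, V i) → M) :
    𝔼 x, g x = 𝔼 a, 𝔼 y, g (Fin.cons a y) := by
  rw [← expect_product', univ_product_univ]
  exact (Fintype.expect_equiv (Fin.consEquiv V) _ _ fun _ => rfl).symm

lemma prod_fin_cons {M : Type*} [CommMonoid M] (g : (∀ i, V i) → M) :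
    ∏ x, g x = ∏ a, ∏ y, g (Fin.cons a y) := by
  rw [← prod_product', univ_product_univ]
  exact (Fintype.prod_equiv (Fin.consEquiv V) _ _ fun _ => rfl).symm

end Averages

/-- The blow-up of a function `g` of `k` variables: the `i`-th variable is replaced by `t i` copies
`f i 0, …, f i (t i - 1)` of itself, and `g` is multiplied over all ways to choose one copy of each
variable. For the indicator of a `k`-uniform hypergraph, it indicates the copies of the complete
`k`-partite hypergraph with parts of sizes `t i`, with repeated vertices allowed. -/
def blowup {k : ℕ} {V : Fin k → Type*} {M : Type*} [CommMonoid M] (t : Fin k → ℕ)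
    (g : (∀ i, V i) → M) (f : ∀ i, Fin (t i) → V i) : M :=
  ∏ c : ∀ i, Fin (t i), g fun i => f i (c i)

lemma blowup_cons {k : ℕ} {V : Fin (k + 1) → Type*} {M : Type*} [CommMonoid M]
    (t : Fin (k + 1) → ℕ) (g : (∀ i, V i) → M) (x : Fin (t 0) → V 0)
    (f : ∀ i : Fin k, Fin (t i.succ) → V i.succ) :
    blowup t g (Fin.cons x f) =
      blowup (fun i => t i.succ) (fun y => ∏ j, g (Fin.cons (x j) y)) f := by
  unfold blowup
  rw [prod_fin_cons, Finset.prod_comm]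
  refine prod_congr rfl fun c _ => prod_congr rfl fun j _ => congrArg g ?_
  ext i
  cases i using Fin.cases <;> rfl

theorem expect_pow_le_expect_blowup {k : ℕ} {V : Fin k → Type*} [∀ i, Fintype (V i)]
    [∀ i, Nonempty (V i)] (t : Fin k → ℕ) {g : (∀ i, V i) → ℝ} (hg : ∀ x, 0 ≤ g x) :
    (𝔼 x, g x) ^ (∏ i, t i) ≤ 𝔼 f, blowup t g f := by
  induction k with
  | zero => simp [blowup, Subsingleton.elim _ (default : ∀ i, V i)]
  | succ k ih =>
    have hprod (x : Fin (t 0) → V 0) (y : ∀ i : Fin k, V i.succ) :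
        0 ≤ ∏ j, g (Fin.cons (x j) y) := prod_nonneg fun _ _ => hg _
    calc (𝔼 x, g x) ^ (∏ i, t i)
        = ((𝔼 a, 𝔼 y, g (Fin.cons a y)) ^ t 0) ^ (∏ i : Fin k, t i.succ) := by
          rw [expect_fin_cons, Fin.prod_univ_succ, pow_mul]
      _ ≤ (𝔼 x : Fin (t 0) → V 0, 𝔼 y, ∏ j, g (Fin.cons (x j) y)) ^ (∏ i : Fin k, t i.succ) :=
          pow_le_pow_left₀
            (pow_nonneg (expect_nonneg fun _ _ => expect_nonneg fun _ _ => hg _) _)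
            (expect_expect_pow_le_expect_expect_prod (g := fun a y => g (Fin.cons a y))
              (fun _ _ => hg _) _) _
      _ ≤ 𝔼 x : Fin (t 0) → V 0, (𝔼 y, ∏ j, g (Fin.cons (x j) y)) ^ (∏ i : Fin k, t i.succ) :=
          expect_pow_le_expect_pow univ_nonempty
            (fun x _ => expect_nonneg fun y _ => hprod x y) _
      _ ≤ 𝔼 x : Fin (t 0) → V 0, 𝔼 f, blowup t g (Fin.cons x f) := by
          simp only [blowup_cons]
          exact expect_le_expect fun x _ => ih (fun i => t i.succ) (hprod x)
      _ = 𝔼 f, blowup t g f := (expect_fin_cons (blowup t g)).symm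

section Collisions

variable {ι V : Type*} [Fintype ι] [DecidableEq ι] [Fintype V] [DecidableEq V]

lemma card_filter_apply_eq_mul_card_le {a b : ι} (hab : a ≠ b) :
    #{f : ι → V | f a = f b} * Fintype.card V ≤ Fintype.card (ι → V) := by
  rw [← card_univ, ← card_product]
  -- Overwriting `f a` loses no information, since `f b` still records it.
  refine card_le_card_of_injOn (t := univ) (fun p => Function.update p.1 a p.2)
    (fun _ _ => mem_univ _) ?_
  rintro ⟨f, v⟩ hf ⟨f', v'⟩ hf' h
  replace hf : f a = f b := by simpa using hf
  replace hf' : f' a = f' b := by simpa using hf'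
  have hv : v = v' := by simpa using congrFun h a
  have hne : ∀ j ≠ a, f j = f' j := fun j hj => by simpa [hj] using congrFun h j
  have hff' : f = f' := by
    ext j
    obtain rfl | hj := eq_or_ne j a
    · rw [hf, hf', hne b hab.symm]
    · exact hne j hj
  rw [hff', hv]

lemma card_filter_not_injective_mul_card_le :
    #{f : ι → V | ¬ f.Injective} * Fintype.card V ≤
      Fintype.card ι ^ 2 * Fintype.card (ι → V) := by
  have hcover : ({f : ι → V | ¬ f.Injective} : Finset (ι → V)) ⊆
      univ.offDiag.biUnion fun p => {f : ι → V | f p.1 = f p.2} := by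
    intro f hf
    obtain ⟨a, b, hfab, hab⟩ := Function.not_injective_iff.mp (mem_filter.mp hf).2
    exact mem_biUnion.mpr ⟨(a, b), by simpa using hab, by simpa using hfab⟩
  calc #{f : ι → V | ¬ f.Injective} * Fintype.card V
      ≤ (∑ p ∈ (univ : Finset ι).offDiag, #{f : ι → V | f p.1 = f p.2}) * Fintype.card V :=
        Nat.mul_le_mul_right _ ((card_le_card hcover).trans card_biUnion_le)
    _ ≤ ∑ _p ∈ (univ : Finset ι).offDiag, Fintype.card (ι → V) := by
        rw [sum_mul]
        exact sum_le_sum fun p hp => card_filter_apply_eq_mul_card_le (mem_offDiag.mp hp).2.2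
    _ ≤ Fintype.card ι ^ 2 * Fintype.card (ι → V) := by
        rw [sum_const, smul_eq_mul, offDiag_card, card_univ, sq]
        exact Nat.mul_le_mul_right _ (Nat.sub_le _ _)

lemma dens_filter_not_injective_mul_card_le :
    (({f : ι → V | ¬ f.Injective} : Finset (ι → V)).dens : ℝ) * Fintype.card V ≤
      Fintype.card ι ^ 2 := by
  rw [nnratCast_dens, div_mul_eq_mul_div]
  refine div_le_of_le_mul₀ (Nat.cast_nonneg _) (by positivity) ?_
  exact_mod_cast card_filter_not_injective_mul_card_le

end Collisions

lemma dens_pow_le_dens_filter_not_injective {V : Type*} [Fintype V] [DecidableEq V] [Nonempty V]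
    {k t : ℕ} {S : Finset (Fin k → V)}
    (hS : ∀ f : Fin k × Fin t → V, f.Injective → ∃ c : Fin k → Fin t, (fun i => f (i, c i)) ∉ S) :
    (S.dens : ℝ) ^ (t ^ k) ≤
      ({f : Fin k × Fin t → V | ¬ f.Injective} : Finset (Fin k × Fin t → V)).dens := by
  set D : Finset (Fin k × Fin t → V) := {f | ¬ f.Injective} with hD
  let g : (Fin k → V) → ℝ := Set.indicator S 1
  have hg (x) : 0 ≤ g x := Set.indicator_nonneg (fun _ _ => zero_le_one) x
  have hg_le (x) : g x ≤ 1 := Set.indicator_le_self' (fun _ _ => zero_le_one) x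
  have hblowup (f : Fin k × Fin t → V) :
      blowup (fun _ => t) g (Function.curry f) ≤ Set.indicator D 1 f := by
    by_cases hf : f.Injective
    · obtain ⟨c, hc⟩ := hS f hf
      have hzero : g (fun i => f (i, c i)) = 0 := Set.indicator_of_notMem (by simpa using hc) _
      exact (prod_eq_zero (mem_univ c) hzero).trans_le
        (Set.indicator_nonneg (fun _ _ => zero_le_one) f)
    · rw [Set.indicator_of_mem (by simpa [hD] using hf)]
      exact prod_le_one (fun _ _ => hg _) fun _ _ => hg_le _
  calc (S.dens : ℝ) ^ (t ^ k) = (𝔼 x, g x) ^ (∏ _i : Fin k, t) := by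
        simp only [g, expect_indicator_one, prod_const, card_univ, Fintype.card_fin]
    _ ≤ 𝔼 f, blowup (fun _ => t) g f := expect_pow_le_expect_blowup _ hg
    _ = 𝔼 f : Fin k × Fin t → V, blowup (fun _ => t) g (Function.curry f) :=
        (Fintype.expect_equiv (Equiv.curry _ _ _) _ _ fun _ => rfl).symm
    _ ≤ 𝔼 f, Set.indicator D 1 f := expect_le_expect fun f _ => hblowup f
    _ = D.dens := expect_indicator_one D

theorem exists_injective_forall_mem_of_le_card {V : Type*} [Fintype V] {k t : ℕ}
    {S : Finset (Fin k → V)} {ε : ℝ} (hε : 0 ≤ ε)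
    (hV : ((k * t) ^ 2 : ℝ) < ε ^ (t ^ k) * Fintype.card V)
    (hS : ε * Fintype.card V ^ k ≤ #S) :
    ∃ f : Fin k × Fin t → V, f.Injective ∧ ∀ c : Fin k → Fin t, (fun i => f (i, c i)) ∈ S := by
  classical
  have : Nonempty V := by
    by_contra! hempty
    simp only [Fintype.card_of_isEmpty, CharP.cast_eq_zero, mul_zero] at hV
    exact hV.not_ge (sq_nonneg _)
  have hdens : ε ≤ S.dens := by
    rw [nnratCast_dens, le_div_iff₀ (by exact_mod_cast Fintype.card_pos)]
    simpa using hS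
  by_contra! hnone
  refine hV.not_ge ?_
  calc ε ^ (t ^ k) * Fintype.card V ≤ (S.dens : ℝ) ^ (t ^ k) * Fintype.card V := by gcongr
    _ ≤ ({f : Fin k × Fin t → V | ¬ f.Injective} : Finset _).dens * Fintype.card V := by
        gcongr
        exact dens_pow_le_dens_filter_not_injective hnone
    _ ≤ Fintype.card (Fin k × Fin t) ^ 2 := dens_filter_not_injective_mul_card_le
    _ = (k * t) ^ 2 := by simp

section Graphs

variable {V : Type*} [Fintype V] {G : SimpleGraph V} {k t : ℕ} {ε : ℝ}

theorem completeEquipartiteGraph_isContained_of_le_labelledCopyCount (hε : 0 ≤ ε)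
    (hV : ((k * t) ^ 2 : ℝ) < ε ^ (t ^ k) * Fintype.card V)
    (hG : ε * Fintype.card V ^ k ≤ G.labelledCopyCount (completeGraph (Fin k))) :
    completeEquipartiteGraph k t ⊑ G := by
  classical
  let S : Finset (Fin k → V) :=
    univ.map ⟨fun φ : Copy (completeGraph (Fin k)) G => ⇑φ, DFunLike.coe_injective⟩
  have hcard : #S = G.labelledCopyCount (completeGraph (Fin k)) := by
    rw [card_map, card_univ, labelledCopyCount]
    congr!
  obtain ⟨f, hf, hS⟩ := exists_injective_forall_mem_of_le_card hε hV (hcard ▸ hG)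
  refine ⟨⟨⟨f, ?_⟩, hf⟩⟩
  rintro ⟨i, a⟩ ⟨j, b⟩ (hij : i ≠ j)
  obtain ⟨φ, -, hφ⟩ := mem_map.mp (hS (Function.update (fun _ => a) j b))
  have hi : φ i = f (i, a) := by simpa [hij] using congrFun hφ i
  have hj : φ j = f (j, b) := by simpa using congrFun hφ j
  rw [← hi, ← hj]
  exact φ.toHom.map_adj hij

theorem labelledCopyCount_completeGraph_le_of_free {β : Type*} [Fintype β] {F : SimpleGraph β}
    (hF : F.Colorable k) (hG : F.Free G) (hε : 0 ≤ ε)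
    (hV : ((k * Fintype.card β) ^ 2 : ℝ) < ε ^ (Fintype.card β ^ k) * Fintype.card V) :
    G.labelledCopyCount (completeGraph (Fin k)) ≤ ε * Fintype.card V ^ k := by
  classical
  obtain ⟨C⟩ := hF
  have hFK : F ⊑ completeEquipartiteGraph k (Fintype.card β) :=
    isContained_completeEquipartiteGraph_of_colorable C _ fun c => set_fintype_card_le_univ _
  by_contra! hlt
  exact hG (hFK.trans <|
    completeEquipartiteGraph_isContained_of_le_labelledCopyCount hε hV hlt.le)

end Graphs

section GeneralizedTuran

variable {α β V : Type*} {H : SimpleGraph α} {F : SimpleGraph β}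

lemma FFree.free {G : SimpleGraph V} (hG : FFree F G) : F.Free G := fun hFG =>
  let ⟨C, hC⟩ := hFG.exists_iso_subgraph
  Set.eq_empty_iff_forall_notMem.mp hG C hC

lemma copyCount_le_labelledCopyCount [Fintype α] [Fintype V] (G : SimpleGraph V) :
    _root_.copyCount H G ≤ G.labelledCopyCount H := by
  classical
  refine le_of_eq_of_le ?_ G.copyCount_le_labelledCopyCount
  rw [_root_.copyCount, SimpleGraph.copyCount, ← Set.ncard_coe_finset]
  simp [copySet]

lemma exGen_le {n : ℕ} {r : ℝ} (hr : 0 ≤ r)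
    (h : ∀ G : SimpleGraph (Fin n), FFree F G → (_root_.copyCount H G : ℝ) ≤ r) :
    (exGen n H F : ℝ) ≤ r := by
  refine (Nat.cast_le.mpr (csSup_le' ?_)).trans (Nat.floor_le hr)
  rintro _ ⟨G, hG, rfl⟩
  exact Nat.le_floor (h G hG)

end GeneralizedTuran

theorem stmt7 {β : Type*} [Fintype β] (k : ℕ) (F : SimpleGraph β)
    (hF : F.chromaticNumber ≤ (k : ℕ∞)) :
    (fun n : ℕ => (exGen n (completeGraph (Fin k)) F : ℝ))
      =o[atTop] fun n : ℕ => (n : ℝ) ^ k := by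
  rw [isLittleO_iff]
  intro ε hε
  have hlarge : ∀ᶠ n : ℕ in atTop,
      ((k * Fintype.card β) ^ 2 : ℝ) < ε ^ (Fintype.card β ^ k) * n :=
    (tendsto_natCast_atTop_atTop.const_mul_atTop (by positivity)).eventually_gt_atTop _
  filter_upwards [hlarge] with n hn
  rw [Real.norm_of_nonneg (by positivity), Real.norm_of_nonneg (by positivity)]
  refine exGen_le (by positivity) fun G hG => ?_
  calc (_root_.copyCount (completeGraph (Fin k)) G : ℝ)
      ≤ G.labelledCopyCount (completeGraph (Fin k)) := by
        exact Nat.cast_le.mpr (_root_.copyCount_le_labelledCopyCount G)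
    _ ≤ ε * Fintype.card (Fin n) ^ k :=
        labelledCopyCount_completeGraph_le_of_free (chromaticNumber_le_iff_colorable.mp hF)
          hG.free hε.le (by rwa [Fintype.card_fin])
    _ = ε * n ^ k := by rw [Fintype.card_fin]
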